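/- Spectral (Kusuoka) representation: for every X ∈ L^ψ, ρ_{φ,β}(X) = sup_σ ∫₀¹ σ(u)·F_X^{-1}(u) du, where the supremum is taken over all non-decreasing functions σ : [0,1] → [0,∞] with ∫₀¹ σ(u) du = 1 and ∫₀¹ φ(σ(u)) du ≤ β. -/

import Mathlib

open MeasureTheory
open scoped ENNReal

noncomputable section

/-- A divergence function: convex, lower semicontinuous `φ : ℝ → ℝ ∪ {∞}` with `φ 1 = 0`,
effective domain `[0, ∞)` and superlinear growth `φ x / x → ∞` as `x → ∞`. -/
structure IsDivergenceFunction (φ : ℝ → EReal) : Prop where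
  convex : ∀ x y a b : ℝ, 0 < a → 0 < b → a + b = 1 →
    φ (a * x + b * y) ≤ (a : EReal) * φ x + (b : EReal) * φ y
  lsc : LowerSemicontinuous φ
  ne_bot : ∀ x : ℝ, φ x ≠ ⊥
  one : φ 1 = 0
  domain : ∀ x : ℝ, φ x ≠ ⊤ ↔ 0 ≤ x
  superlinear : ∀ M : ℝ, ∃ N : ℝ, ∀ x : ℝ, N ≤ x → ((M * x : ℝ) : EReal) ≤ φ x

/-- The convex conjugate `ψ(y) = sup_z (y·z − φ(z))`, as an extended real number. -/
def psiE (φ : ℝ → EReal) (y : ℝ) : EReal := ⨆ z : ℝ, (((y * z : ℝ) : EReal) - φ z)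

/-- The convex conjugate, as a real number (it is finite for divergence functions). -/
def psiR (φ : ℝ → EReal) (y : ℝ) : ℝ := (psiE φ y).toReal

open Classical in
/-- The objective `t (β + μ + E ψ(X/t − μ))` of the φ-divergence risk measure;
the value is `⊤` when `ψ(X/t − μ)` fails to be integrable. -/
def rhoObj {Ω : Type*} [MeasurableSpace Ω] (φ : ℝ → EReal) (β : ℝ) (P : Measure Ω)
    (X : Ω → ℝ) (μ t : ℝ) : EReal :=
  if Integrable (fun ω => psiR φ (X ω / t - μ)) P then
    (((t * (β + μ + ∫ ω, psiR φ (X ω / t - μ) ∂P)) : ℝ) : EReal)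
  else ⊤

/-- The φ-divergence risk measure `ρ_{φ,β}(X) = inf_{μ ∈ ℝ, t > 0} t (β + μ + E ψ(X/t − μ))`. -/
def rhoDiv {Ω : Type*} [MeasurableSpace Ω] (φ : ℝ → EReal) (β : ℝ) (P : Measure Ω)
    (X : Ω → ℝ) : EReal :=
  ⨅ (μ : ℝ) (t : ℝ) (_ : 0 < t), rhoObj φ β P X μ t

/-- The (generalized inverse) quantile function `F_X⁻¹(u) = inf { x : P(X ≤ x) ≥ u }`. -/
def quantile {Ω : Type*} [MeasurableSpace Ω] (P : Measure Ω) (X : Ω → ℝ) (u : ℝ) : ℝ :=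
  sInf {x : ℝ | u ≤ (P {ω | X ω ≤ x}).toReal}
variable {Ω : Type*} [MeasurableSpace Ω]

/-!
Both sides depend only on the law of `X`, and the quantile function on the unit interval has that
law, so `X` may be taken to be its own quantile function `q`. Integrating Young's inequality
`y z ≤ φ(z) + ψ(y)` against a spectrum bounds the supremum by the infimum. Conversely, restrict to
the spectra `h ∘ q` with `h` bounded, nonnegative and nondecreasing. Maximising `∫ h(q) q` under the
two constraints is a concave programme with Slater point `h = 1`; its Lagrange multipliers are the
`t` and, up to the scaling by `t`, the `μ` of the infimum. The supremum of the Lagrangian over `h`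
is the integral of the pointwise supremum, that is, of `ψ(q / t - μ)`: a pointwise maximiser is a
nondecreasing function of `q`, and it becomes bounded after truncating its argument, so monotone
convergence applies.
-/

open Filter ProbabilityTheory Set Topology

section ConvexDuality

variable {F E : Type*} [AddCommGroup F] [Module ℝ F] [TopologicalSpace F]
  [IsTopologicalAddGroup F] [ContinuousSMul ℝ F] [AddCommGroup E] [Module ℝ E]

lemma exists_affine_majorant_of_hypograph {S : Set (F × ℝ)} (hS : Convex ℝ S)
    (hS_lower : ∀ x r s, (x, r) ∈ S → s ≤ r → (x, s) ∈ S) {x₀ : F} {c V : ℝ}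
    (hc : ∀ᶠ x in 𝓝 x₀, (x, c) ∈ S) (hV : ∀ r, (x₀, r) ∈ S → r ≤ V) :
    ∃ g : F →L[ℝ] ℝ, ∀ x r, (x, r) ∈ S → r ≤ V + g (x - x₀) := by
  have hV_notMem : (x₀, V) ∉ interior S := fun h => by
    have hnear : ∀ᶠ r in 𝓝 V, (x₀, r) ∈ S :=
      (Continuous.prodMk_right x₀).continuousAt (mem_interior_iff_mem_nhds.1 h)
    obtain ⟨r, hr, hVr⟩ := ((hnear.filter_mono nhdsWithin_le_nhds).and
      (self_mem_nhdsWithin : Ioi V ∈ 𝓝[>] V)).exists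
    exact (hV r hr).not_gt hVr
  have hc_mem : (x₀, c - 1) ∈ interior S := by
    rw [mem_interior_iff_mem_nhds]
    filter_upwards [prod_mem_nhds hc (Iio_mem_nhds (sub_one_lt c))] with p hp
    exact hS_lower _ _ _ hp.1 (le_of_lt hp.2)
  obtain ⟨f, hf⟩ := geometric_hahn_banach_open_point hS.interior isOpen_interior hV_notMem
  have hf_le : ∀ p ∈ S, f p ≤ f (x₀, V) := fun p hp => by
    refine closure_minimal (fun q hq => (hf q hq).le) (isClosed_Iic.preimage f.continuous) ?_
    rw [hS.closure_interior_eq_closure_of_nonempty_interior ⟨_, hc_mem⟩]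
    exact subset_closure hp
  set g : F →L[ℝ] ℝ := f.comp (ContinuousLinearMap.inl ℝ F ℝ)
  set δ := f (0, 1)
  have hf_apply : ∀ x r, f (x, r) = g x + r * δ := fun x r => by
    have hdecomp : (x, r) = (x, 0) + r • ((0, 1) : F × ℝ) := by simp
    rw [hdecomp, map_add, map_smul, smul_eq_mul]
    rfl
  have hδ : 0 < δ := by
    have hlt := hf _ hc_mem
    have hcV := hV c hc.self_of_nhds
    rw [hf_apply, hf_apply] at hlt
    nlinarith
  refine ⟨-δ⁻¹ • g, fun x r hxr => ?_⟩
  have hle := hf_le _ hxr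
  rw [hf_apply, hf_apply] at hle
  have hr : r ≤ (V * δ - (g x - g x₀)) / δ := by
    rw [le_div_iff₀ hδ]
    linarith
  calc r ≤ (V * δ - (g x - g x₀)) / δ := hr
    _ = V + (-δ⁻¹ • g) (x - x₀) := by
      simp only [smul_apply, map_sub, smul_eq_mul]
      field_simp
      ring

lemma exists_lagrange_multipliers {D : Set E} {ℓ G H : E → ℝ} (hℓ_convex : ConvexOn ℝ D ℓ)
    (hℓ_concave : ConcaveOn ℝ D ℓ) (hG : ConvexOn ℝ D G) (hH : ConcaveOn ℝ D H) {a b c V : ℝ}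
    (hslater : ∀ᶠ p in 𝓝 (a, b), ∃ z ∈ D, ℓ z = p.1 ∧ G z ≤ p.2 ∧ c ≤ H z)
    (hV : ∀ z ∈ D, ℓ z = a → G z ≤ b → H z ≤ V) :
    ∃ m t : ℝ, 0 ≤ t ∧ ∀ z ∈ D, H z ≤ V + m * (ℓ z - a) + t * (G z - b) := by
  set S : Set ((ℝ × ℝ) × ℝ) := {p | ∃ z ∈ D, ℓ z = p.1.1 ∧ G z ≤ p.1.2 ∧ p.2 ≤ H z}
  have hS : Convex ℝ S := by
    rintro p ⟨z, hz, hzℓ, hzG, hzH⟩ q ⟨w, hw, hwℓ, hwG, hwH⟩ r s hr hs hrs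
    refine ⟨r • z + s • w, hH.1 hz hw hr hs hrs, ?_, (hG.2 hz hw hr hs hrs).trans ?_,
      le_trans ?_ (hH.2 hz hw hr hs hrs)⟩
    · rw [le_antisymm (hℓ_convex.2 hz hw hr hs hrs) (hℓ_concave.2 hz hw hr hs hrs), hzℓ, hwℓ]
      rfl
    · exact add_le_add (mul_le_mul_of_nonneg_left hzG hr) (mul_le_mul_of_nonneg_left hwG hs)
    · exact add_le_add (mul_le_mul_of_nonneg_left hzH hr) (mul_le_mul_of_nonneg_left hwH hs)
  obtain ⟨g, hg⟩ := exists_affine_majorant_of_hypograph hS (x₀ := (a, b)) (c := c) (V := V)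
    (fun _ _ _ ⟨z, hz, hzℓ, hzG, hzH⟩ hsr => ⟨z, hz, hzℓ, hzG, hsr.trans hzH⟩) hslater
    (fun r ⟨z, hz, hzℓ, hzG, hzH⟩ => hzH.trans (hV z hz hzℓ hzG))
  set m := g (1, 0)
  set t := g (0, 1)
  have hg_apply : ∀ x y, g (x, y) = m * x + t * y := fun x y => by
    have hdecomp : (x, y) = x • ((1, 0) : ℝ × ℝ) + y • (0, 1) := by simp
    rw [hdecomp, map_add, map_smul, map_smul, smul_eq_mul, smul_eq_mul, mul_comm x, mul_comm y]
  have hle : ∀ z ∈ D, ∀ r, G z ≤ r → H z ≤ V + m * (ℓ z - a) + t * (r - b) := fun z hz r hr => by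
    have hzr := hg (ℓ z, r) (H z) ⟨z, hz, rfl, hr, le_rfl⟩
    rw [Prod.mk_sub_mk, hg_apply] at hzr
    linarith
  have ht : 0 ≤ t := by
    by_contra! ht_neg
    obtain ⟨z, hz, hzℓ, hzG, -⟩ := hslater.self_of_nhds
    obtain ⟨r, hr, hbr⟩ : ∃ r, V + t * (r - b) < H z ∧ b ≤ r := by
      have htendsto : Tendsto (fun r => V + t * (r - b)) atTop atBot :=
        tendsto_atBot_add_const_left _ _
          ((tendsto_atTop_add_const_right _ (-b) tendsto_id).const_mul_atTop_of_neg ht_neg)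
      exact ((htendsto.eventually_lt_atBot (H z)).and (eventually_ge_atTop b)).exists
    have hzr := hle z hz r (hzG.trans hbr)
    rw [hzℓ] at hzr
    linarith
  exact ⟨m, t, ht, fun z hz => hle z hz _ le_rfl⟩

end ConvexDuality

section MonotoneConvergence

variable {P : Measure Ω} {f : ℕ → Ω → ℝ} {g : Ω → ℝ} {C : ℝ}

lemma integrable_of_tendsto_of_monotone_of_integral_le (hf : ∀ n, Integrable (f n) P)
    (hf_mono : ∀ᵐ ω ∂P, Monotone fun n => f n ω)
    (hfg : ∀ᵐ ω ∂P, Tendsto (fun n => f n ω) atTop (𝓝 (g ω)))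
    (hC : ∀ n, ∫ ω, f n ω ∂P ≤ C) : Integrable g P := by
  have hf_sub : ∀ n, Integrable (fun ω => f n ω - f 0 ω) P := fun n => (hf n).sub (hf 0)
  have hlintegral_le : ∀ n, ∫⁻ ω, ENNReal.ofReal (f n ω - f 0 ω) ∂P
      ≤ ENNReal.ofReal (C - ∫ ω, f 0 ω ∂P) := fun n => by
    rw [← ofReal_integral_eq_lintegral_ofReal (hf_sub n)
      (hf_mono.mono fun ω hω => sub_nonneg.2 (hω n.zero_le)), integral_sub (hf n) (hf 0)]
    exact ENNReal.ofReal_le_ofReal (by linarith [hC n])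
  have hlintegral_tendsto : Tendsto (fun n => ∫⁻ ω, ENNReal.ofReal (f n ω - f 0 ω) ∂P) atTop
      (𝓝 (∫⁻ ω, ENNReal.ofReal (g ω - f 0 ω) ∂P)) := by
    refine lintegral_tendsto_of_tendsto_of_monotone
      (fun n => (hf_sub n).aemeasurable.ennreal_ofReal) ?_ ?_
    · filter_upwards [hf_mono] with ω hω n k hnk
      exact ENNReal.ofReal_le_ofReal (sub_le_sub_right (hω hnk) _)
    · filter_upwards [hfg] with ω hω
      exact ENNReal.tendsto_ofReal (hω.sub_const _)
  have hg_sub : Integrable (fun ω => g ω - f 0 ω) P := by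
    refine ⟨(aestronglyMeasurable_of_tendsto_ae _ (fun n => (hf n).1) hfg).sub (hf 0).1, ?_⟩
    rw [hasFiniteIntegral_iff_ofReal]
    · exact (le_of_tendsto' hlintegral_tendsto hlintegral_le).trans_lt ENNReal.ofReal_lt_top
    · filter_upwards [hf_mono, hfg] with ω hω hω_lim
      exact sub_nonneg.2 (hω.ge_of_tendsto hω_lim 0)
  exact (hg_sub.add (hf 0)).congr (.of_forall fun ω => sub_add_cancel (g ω) (f 0 ω))

end MonotoneConvergence

/-- The finite values of `φ`, as a real function; on `(-∞, 0)`, where a divergence function is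
`⊤`, the value `0` is junk. -/
def phiR (φ : ℝ → EReal) (z : ℝ) : ℝ := (φ z).toReal

namespace IsDivergenceFunction

variable {φ : ℝ → EReal} {z : ℝ}

lemma coe_phiR (hφ : IsDivergenceFunction φ) (hz : 0 ≤ z) : (phiR φ z : EReal) = φ z :=
  EReal.coe_toReal ((hφ.domain z).2 hz) (hφ.ne_bot z)

lemma eq_top_of_neg (hφ : IsDivergenceFunction φ) (hz : z < 0) : φ z = ⊤ := by
  by_contra hne
  exact ((hφ.domain z).1 hne).not_gt hz

lemma phiR_one (hφ : IsDivergenceFunction φ) : phiR φ 1 = 0 := by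
  rw [phiR, hφ.one, EReal.toReal_zero]

lemma measurable_phiR (hφ : IsDivergenceFunction φ) : Measurable (phiR φ) :=
  hφ.lsc.measurable.ereal_toReal

lemma convexOn_phiR (hφ : IsDivergenceFunction φ) : ConvexOn ℝ (Ici 0) (phiR φ) := by
  refine convexOn_iff_forall_pos.2 ⟨convex_Ici 0, fun x hx y hy a b ha hb hab => ?_⟩
  have hle := hφ.convex x y a b ha hb hab
  rw [mem_Ici] at hx hy
  rw [← hφ.coe_phiR (by positivity), ← hφ.coe_phiR hx, ← hφ.coe_phiR hy] at hle
  exact_mod_cast hle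

lemma continuousAt_phiR (hφ : IsDivergenceFunction φ) (hz : 0 < z) :
    ContinuousAt (phiR φ) z := by
  have hcont := hφ.convexOn_phiR.continuousOn_interior
  rw [interior_Ici] at hcont
  exact hcont.continuousAt (Ioi_mem_nhds hz)

lemma lowerSemicontinuousOn_phiR (hφ : IsDivergenceFunction φ) :
    LowerSemicontinuousOn (phiR φ) (Ici 0) := by
  intro x hx a (ha : a < phiR φ x)
  rw [← EReal.coe_lt_coe_iff, hφ.coe_phiR hx] at ha
  filter_upwards [mem_nhdsWithin_of_mem_nhds (hφ.lsc x a ha), self_mem_nhdsWithin] with y hay hy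
  rwa [← hφ.coe_phiR hy, gt_iff_lt, EReal.coe_lt_coe_iff] at hay

lemma exists_isMaxOn_mul_sub_phiR (hφ : IsDivergenceFunction φ) (y : ℝ) :
    ∃ z ∈ Ici (0 : ℝ), IsMaxOn (fun w => y * w - phiR φ w) (Ici 0) z := by
  obtain ⟨N, hN⟩ := hφ.superlinear (y + |y|)
  have hlsc : LowerSemicontinuousOn (fun w => phiR φ w + -(y * w)) (Icc 0 (max N 1)) :=
    (hφ.lowerSemicontinuousOn_phiR.mono Icc_subset_Ici_self).add
      (Continuous.lowerSemicontinuous (by fun_prop) |>.lowerSemicontinuousOn _)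
  obtain ⟨z, hz, hz_min⟩ := hlsc.exists_isMinOn ⟨1, by simp⟩ isCompact_Icc
  have hz_max : ∀ w ∈ Icc 0 (max N 1), y * w - phiR φ w ≤ y * z - phiR φ z := fun w hw => by
    linarith [isMinOn_iff.1 hz_min w hw]
  refine ⟨z, hz.1, isMaxOn_iff.2 fun w hw => ?_⟩
  obtain hwN | hNw := le_total w (max N 1)
  · exact hz_max w ⟨hw, hwN⟩
  · have hφw : (y + |y|) * w ≤ phiR φ w := by
      have hle := hN w ((le_max_left _ _).trans hNw)
      rwa [← hφ.coe_phiR hw, EReal.coe_le_coe_iff] at hle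
    have hw_one : 1 ≤ w := (le_max_right _ _).trans hNw
    have hz_one := hz_max 1 (by simp)
    rw [hφ.phiR_one] at hz_one
    nlinarith [abs_nonneg y, neg_abs_le y]

/-- A maximiser of `z ↦ y z - φ(z)`: a selection of the subdifferential of `ψ` at `y`. -/
def argmax (hφ : IsDivergenceFunction φ) (y : ℝ) : ℝ :=
  (hφ.exists_isMaxOn_mul_sub_phiR y).choose

lemma argmax_nonneg (hφ : IsDivergenceFunction φ) (y : ℝ) : 0 ≤ hφ.argmax y :=
  (hφ.exists_isMaxOn_mul_sub_phiR y).choose_spec.1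

lemma mul_sub_phiR_le (hφ : IsDivergenceFunction φ) (y : ℝ) (hz : 0 ≤ z) :
    y * z - phiR φ z ≤ y * hφ.argmax y - phiR φ (hφ.argmax y) :=
  (hφ.exists_isMaxOn_mul_sub_phiR y).choose_spec.2 hz

lemma monotone_argmax (hφ : IsDivergenceFunction φ) : Monotone hφ.argmax := fun x y hxy => by
  obtain rfl | hlt := hxy.eq_or_lt
  · rfl
  · nlinarith [hφ.mul_sub_phiR_le x (hφ.argmax_nonneg y), hφ.mul_sub_phiR_le y (hφ.argmax_nonneg x)]

lemma psiR_eq (hφ : IsDivergenceFunction φ) (y : ℝ) :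
    psiR φ y = y * hφ.argmax y - phiR φ (hφ.argmax y) := by
  suffices hψ : psiE φ y = ((y * hφ.argmax y - phiR φ (hφ.argmax y) : ℝ) : EReal) by
    rw [psiR, hψ, EReal.toReal_coe]
  refine le_antisymm (iSup_le fun z => ?_) (le_iSup_of_le (hφ.argmax y) ?_)
  · obtain hz | hz := lt_or_ge z 0
    · rw [hφ.eq_top_of_neg hz, EReal.sub_top]
      exact bot_le
    · rw [← hφ.coe_phiR hz, ← EReal.coe_sub]
      exact EReal.coe_le_coe (hφ.mul_sub_phiR_le y hz)
  · rw [← hφ.coe_phiR (hφ.argmax_nonneg y), EReal.coe_sub]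

lemma mul_sub_phiR_le_psiR (hφ : IsDivergenceFunction φ) (y : ℝ) (hz : 0 ≤ z) :
    y * z - phiR φ z ≤ psiR φ y :=
  (hφ.mul_sub_phiR_le y hz).trans_eq (hφ.psiR_eq y).symm

lemma neg_psiR_zero_le_phiR (hφ : IsDivergenceFunction φ) (hz : 0 ≤ z) :
    -psiR φ 0 ≤ phiR φ z := by
  linarith [hφ.mul_sub_phiR_le_psiR 0 hz]

lemma psiR_zero_nonneg (hφ : IsDivergenceFunction φ) : 0 ≤ psiR φ 0 := by
  linarith [hφ.neg_psiR_zero_le_phiR zero_le_one, hφ.phiR_one]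

lemma monotone_psiR (hφ : IsDivergenceFunction φ) : Monotone (psiR φ) := fun x y hxy => by
  rw [hφ.psiR_eq x]
  exact (sub_le_sub_right (mul_le_mul_of_nonneg_right hxy (hφ.argmax_nonneg x)) _).trans
    (hφ.mul_sub_phiR_le_psiR y (hφ.argmax_nonneg x))

lemma monotoneOn_mul_argmax_sub_phiR (hφ : IsDivergenceFunction φ) (y : ℝ) :
    MonotoneOn (fun s => y * hφ.argmax s - phiR φ (hφ.argmax s)) (Iic y) :=
  fun r _ s hs hrs => by
    have hle : (y - s) * hφ.argmax r ≤ (y - s) * hφ.argmax s :=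
      mul_le_mul_of_nonneg_left (hφ.monotone_argmax hrs) (sub_nonneg.2 hs)
    linarith [hφ.mul_sub_phiR_le s (hφ.argmax_nonneg r)]

lemma exists_abs_phiR_le (hφ : IsDivergenceFunction φ) (K : ℝ) :
    ∃ C, ∀ z ∈ Icc 0 K, |phiR φ z| ≤ C := by
  refine ⟨max (max (phiR φ 0) (phiR φ K)) (psiR φ 0), fun z hz => abs_le.2 ⟨?_, ?_⟩⟩
  · exact (neg_le_neg (le_max_right _ _)).trans (hφ.neg_psiR_zero_le_phiR hz.1)
  · exact (hφ.convexOn_phiR.le_max_of_mem_Icc self_mem_Ici (hz.1.trans hz.2) hz).trans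
      (le_max_left _ _)

end IsDivergenceFunction

section RiskMeasure

variable {Ω' : Type*} [MeasurableSpace Ω'] {P : Measure Ω} {P' : Measure Ω'} {X : Ω → ℝ}
  {X' : Ω' → ℝ} {φ : ℝ → EReal} {β : ℝ}

lemma rhoDiv_congr (hφ : IsDivergenceFunction φ) (hXX' : IdentDistrib X X' P P') :
    rhoDiv φ β P X = rhoDiv φ β P' X' := by
  refine iInf_congr fun μ => iInf_congr fun t => iInf_congr fun _ => ?_
  have hψ : IdentDistrib (fun ω => psiR φ (X ω / t - μ)) (fun ω => psiR φ (X' ω / t - μ)) P P' :=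
    hXX'.comp (hφ.monotone_psiR.measurable.comp ((measurable_id.div_const t).sub_const μ))
  classical
  rw [rhoObj, rhoObj, hψ.integral_eq]
  exact if_congr hψ.integrable_iff rfl rfl

lemma integral_mul_le_rhoDiv (hφ : IsDivergenceFunction φ) {D : Ω → ℝ} (hD_nonneg : 0 ≤ᵐ[P] D)
    (hD_one : ∫ ω, D ω ∂P = 1) (hDφ : Integrable (fun ω => phiR φ (D ω)) P)
    (hDβ : ∫ ω, phiR φ (D ω) ∂P ≤ β) (hDX : Integrable (fun ω => D ω * X ω) P) :
    ((∫ ω, D ω * X ω ∂P : ℝ) : EReal) ≤ rhoDiv φ β P X := by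
  refine le_iInf fun μ => le_iInf fun t => le_iInf fun ht => ?_
  rw [rhoObj]
  split_ifs with hψ
  swap
  · exact le_top
  have hD : Integrable D P := integrable_of_integral_eq_one hD_one
  have hyoung : ∫ ω, (D ω * X ω / t - μ * D ω) ∂P
      ≤ ∫ ω, (phiR φ (D ω) + psiR φ (X ω / t - μ)) ∂P := by
    refine integral_mono_ae ((hDX.div_const t).sub (hD.const_mul μ)) (hDφ.add hψ) ?_
    filter_upwards [hD_nonneg] with ω hω
    have hle := hφ.mul_sub_phiR_le_psiR (X ω / t - μ) hω
    calc D ω * X ω / t - μ * D ω = (X ω / t - μ) * D ω := by ring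
      _ ≤ phiR φ (D ω) + psiR φ (X ω / t - μ) := by linarith
  rw [integral_sub (hDX.div_const t) (hD.const_mul μ), integral_add hDφ hψ, integral_div,
    integral_const_mul, hD_one] at hyoung
  rw [EReal.coe_le_coe_iff, ← div_le_iff₀' ht]
  linarith

end RiskMeasure

/-- Bounded nonnegative nondecreasing functions `h`. The variables `h ∘ X` are the bounded
densities comonotone with `X`, not yet normalised to have mean one. -/
def monotoneWeights : Set (ℝ → ℝ) := {h | Monotone h ∧ (∀ x, 0 ≤ h x) ∧ BddAbove (range h)}

namespace monotoneWeights

variable {P : Measure Ω} {X Y : Ω → ℝ} {φ : ℝ → EReal} {β : ℝ} {h k : ℝ → ℝ}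

lemma const_mem {a : ℝ} (ha : 0 ≤ a) : (fun _ => a) ∈ monotoneWeights :=
  ⟨monotone_const, fun _ => ha, a, forall_mem_range.2 fun _ => le_rfl⟩

lemma comp_mem (hh : h ∈ monotoneWeights) {f : ℝ → ℝ} (hf : Monotone f) :
    h ∘ f ∈ monotoneWeights :=
  ⟨hh.1.comp hf, fun x => hh.2.1 (f x), hh.2.2.mono (range_comp_subset_range f h)⟩

lemma exists_mem_Icc (hh : h ∈ monotoneWeights) : ∃ K, ∀ x, h x ∈ Icc 0 K :=
  let ⟨K, hK⟩ := hh.2.2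
  ⟨K, fun x => ⟨hh.2.1 x, hK (mem_range_self x)⟩⟩

lemma convex : Convex ℝ monotoneWeights := fun h hh k hk a b ha hb _ => by
  obtain ⟨K, hK⟩ := exists_mem_Icc hh
  obtain ⟨L, hL⟩ := exists_mem_Icc hk
  exact ⟨(hh.1.const_smul ha).add (hk.1.const_smul hb),
    fun x => add_nonneg (smul_nonneg ha (hh.2.1 x)) (smul_nonneg hb (hk.2.1 x)),
    a • K + b • L, forall_mem_range.2 fun x =>
      add_le_add (smul_le_smul_of_nonneg_left (hK x).2 ha)
        (smul_le_smul_of_nonneg_left (hL x).2 hb)⟩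

lemma aemeasurable_comp (hh : h ∈ monotoneWeights) (hX : AEMeasurable X P) :
    AEMeasurable (fun ω => h (X ω)) P :=
  hh.1.measurable.comp_aemeasurable hX

lemma integrable_mul (hh : h ∈ monotoneWeights) (hX : AEMeasurable X P) (hY : Integrable Y P) :
    Integrable (fun ω => h (X ω) * Y ω) P := by
  obtain ⟨K, hK⟩ := exists_mem_Icc hh
  refine hY.bdd_mul (c := K) (aemeasurable_comp hh hX).aestronglyMeasurable (.of_forall fun ω => ?_)
  rw [Real.norm_of_nonneg (hK _).1]
  exact (hK _).2

lemma integrable [IsFiniteMeasure P] (hh : h ∈ monotoneWeights) (hX : AEMeasurable X P) :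
    Integrable (fun ω => h (X ω)) P := by
  simpa only [mul_one] using integrable_mul hh hX (integrable_const 1)

lemma integrable_phiR [IsFiniteMeasure P] (hφ : IsDivergenceFunction φ)
    (hh : h ∈ monotoneWeights) (hX : AEMeasurable X P) :
    Integrable (fun ω => phiR φ (h (X ω))) P := by
  obtain ⟨K, hK⟩ := exists_mem_Icc hh
  obtain ⟨C, hC⟩ := hφ.exists_abs_phiR_le K
  exact .of_bound (hφ.measurable_phiR.comp_aemeasurable
    (aemeasurable_comp hh hX)).aestronglyMeasurable C (.of_forall fun ω => hC _ (hK _))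

lemma integral_smul_add_smul_mul (hh : h ∈ monotoneWeights) (hk : k ∈ monotoneWeights)
    (hX : AEMeasurable X P) (hY : Integrable Y P) (a b : ℝ) :
    ∫ ω, (a • h + b • k) (X ω) * Y ω ∂P
      = a • ∫ ω, h (X ω) * Y ω ∂P + b • ∫ ω, k (X ω) * Y ω ∂P := by
  rw [← integral_smul, ← integral_smul, ← integral_add ((integrable_mul hh hX hY).fun_smul a)
    ((integrable_mul hk hX hY).fun_smul b)]
  refine integral_congr_ae (.of_forall fun ω => ?_)
  simp only [Pi.add_apply, Pi.smul_apply, smul_eq_mul]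
  ring

lemma convexOn_integral_mul (hX : AEMeasurable X P) (hY : Integrable Y P) :
    ConvexOn ℝ monotoneWeights fun h => ∫ ω, h (X ω) * Y ω ∂P :=
  ⟨convex, fun _ hh _ hk a b _ _ _ => (integral_smul_add_smul_mul hh hk hX hY a b).le⟩

lemma concaveOn_integral_mul (hX : AEMeasurable X P) (hY : Integrable Y P) :
    ConcaveOn ℝ monotoneWeights fun h => ∫ ω, h (X ω) * Y ω ∂P :=
  ⟨convex, fun _ hh _ hk a b _ _ _ => (integral_smul_add_smul_mul hh hk hX hY a b).ge⟩

lemma convexOn_integral_phiR [IsFiniteMeasure P] (hφ : IsDivergenceFunction φ)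
    (hX : AEMeasurable X P) :
    ConvexOn ℝ monotoneWeights fun h => ∫ ω, phiR φ (h (X ω)) ∂P := by
  refine ⟨convex, fun h hh k hk a b ha hb hab => ?_⟩
  have hh_int := (integrable_phiR hφ hh hX).fun_smul a
  have hk_int := (integrable_phiR hφ hk hX).fun_smul b
  rw [← integral_smul, ← integral_smul, ← integral_add hh_int hk_int]
  exact integral_mono (integrable_phiR hφ (convex hh hk ha hb hab) hX) (hh_int.add hk_int)
    fun ω => hφ.convexOn_phiR.2 (hh.2.1 _) (hk.2.1 _) ha hb hab

lemma eventually_exists_weight [IsProbabilityMeasure P] (hφ : IsDivergenceFunction φ)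
    (hβ : 0 < β) {c : ℝ} (hc : c < ∫ ω, Y ω ∂P) :
    ∀ᶠ p in 𝓝 ((1 : ℝ), β), ∃ h ∈ monotoneWeights, ∫ ω, h (X ω) * 1 ∂P = p.1 ∧
      ∫ ω, phiR φ (h (X ω)) ∂P ≤ p.2 ∧ c ≤ ∫ ω, h (X ω) * Y ω ∂P := by
  have hφ_cont : ContinuousAt (phiR φ ∘ Prod.fst) ((1 : ℝ), β) :=
    ContinuousAt.comp (hφ.continuousAt_phiR zero_lt_one) continuousAt_fst
  have hφ_lt : ∀ᶠ p in 𝓝 ((1 : ℝ), β), phiR φ p.1 < p.2 :=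
    hφ_cont.eventually_lt continuousAt_snd (by rwa [Function.comp_apply, hφ.phiR_one])
  have hY_lt : ∀ᶠ p in 𝓝 ((1 : ℝ), β), c < p.1 * ∫ ω, Y ω ∂P :=
    continuousAt_const.eventually_lt (by fun_prop) (by rwa [one_mul])
  have hpos : ∀ᶠ p in 𝓝 ((1 : ℝ), β), 0 < p.1 :=
    continuousAt_const.eventually_lt continuousAt_fst zero_lt_one
  filter_upwards [hφ_lt, hY_lt, hpos] with p hpφ hpY hp
  refine ⟨fun _ => p.1, const_mem hp.le, by simp, by simpa using hpφ.le, ?_⟩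
  rw [integral_const_mul]
  exact hpY.le

end monotoneWeights

section StrongDuality

variable {P : Measure Ω} {X Y : Ω → ℝ} {φ : ℝ → EReal} {β V : ℝ}

lemma IsDivergenceFunction.argmax_min_mem_monotoneWeights (hφ : IsDivergenceFunction φ) (c : ℝ) :
    (fun y => hφ.argmax (min y c)) ∈ monotoneWeights :=
  ⟨fun _ _ hxy => hφ.monotone_argmax (min_le_min_right c hxy), fun _ => hφ.argmax_nonneg _,
    hφ.argmax c, forall_mem_range.2 fun _ => hφ.monotone_argmax (min_le_right _ _)⟩

lemma integrable_psiR_and_integral_le [IsFiniteMeasure P] (hφ : IsDivergenceFunction φ)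
    (hY : Integrable Y P)
    (hV : ∀ h ∈ monotoneWeights, ∫ ω, (Y ω * h (Y ω) - phiR φ (h (Y ω))) ∂P ≤ V) :
    Integrable (fun ω => psiR φ (Y ω)) P ∧ ∫ ω, psiR φ (Y ω) ∂P ≤ V := by
  set h : ℕ → ℝ → ℝ := fun n y => hφ.argmax (min y n)
  set f : ℕ → Ω → ℝ := fun n ω => Y ω * h n (Y ω) - phiR φ (h n (Y ω))
  have hh : ∀ n, h n ∈ monotoneWeights := fun n => hφ.argmax_min_mem_monotoneWeights n
  have hf_int : ∀ n, Integrable (f n) P := fun n =>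
    ((monotoneWeights.integrable_mul (hh n) hY.aemeasurable hY).congr
      (.of_forall fun _ => mul_comm _ _)).sub
      (monotoneWeights.integrable_phiR hφ (hh n) hY.aemeasurable)
  have hf_mono : ∀ᵐ ω ∂P, Monotone fun n => f n ω := .of_forall fun ω n k hnk =>
    hφ.monotoneOn_mul_argmax_sub_phiR (Y ω) (mem_Iic.2 (min_le_left _ _))
      (mem_Iic.2 (min_le_left _ _)) (min_le_min_left _ (Nat.cast_le.2 hnk))
  have hf_tendsto : ∀ᵐ ω ∂P, Tendsto (fun n => f n ω) atTop (𝓝 (psiR φ (Y ω))) :=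
    .of_forall fun ω => tendsto_const_nhds.congr' <| by
      filter_upwards [tendsto_natCast_atTop_atTop.eventually_ge_atTop (Y ω)] with n hn
      simp only [f, h, min_eq_left hn, hφ.psiR_eq]
  have hf_le : ∀ n, ∫ ω, f n ω ∂P ≤ V := fun n => hV _ (hh n)
  have hψ := integrable_of_tendsto_of_monotone_of_integral_le hf_int hf_mono hf_tendsto hf_le
  exact ⟨hψ, le_of_tendsto'
    (integral_tendsto_of_tendsto_of_monotone hf_int hψ hf_mono hf_tendsto) hf_le⟩

lemma rhoDiv_le_of_multipliers [IsFiniteMeasure P] (hφ : IsDivergenceFunction φ)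
    (hX : Integrable X P) {m t : ℝ} (ht : 0 < t)
    (hV : ∀ h ∈ monotoneWeights, ∫ ω, h (X ω) * X ω ∂P
      ≤ V + m * (∫ ω, h (X ω) ∂P - 1) + t * (∫ ω, phiR φ (h (X ω)) ∂P - β)) :
    rhoDiv φ β P X ≤ V := by
  have hY : Integrable (fun ω => X ω / t - m / t) P := (hX.div_const t).sub (integrable_const _)
  have hscale : Monotone fun x => x / t - m / t := fun x y hxy =>
    sub_le_sub_right (div_le_div_of_nonneg_right hxy ht.le) _
  obtain ⟨hψ, hψ_le⟩ := integrable_psiR_and_integral_le (V := (V - m) / t - β) hφ hY fun k hk => by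
    set h : ℝ → ℝ := k ∘ fun x => x / t - m / t
    have hh : h ∈ monotoneWeights := monotoneWeights.comp_mem hk hscale
    have hh_int := monotoneWeights.integrable hh hX.aemeasurable
    have hhX_int := monotoneWeights.integrable_mul hh hX.aemeasurable hX
    have hlin_int : Integrable (fun ω => (h (X ω) * X ω - m * h (X ω)) / t) P :=
      (hhX_int.sub (hh_int.const_mul m)).div_const t
    calc ∫ ω, ((X ω / t - m / t) * h (X ω) - phiR φ (h (X ω))) ∂P
        = ∫ ω, ((h (X ω) * X ω - m * h (X ω)) / t - phiR φ (h (X ω))) ∂P :=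
          integral_congr_ae (.of_forall fun ω => by ring)
      _ = (∫ ω, h (X ω) * X ω ∂P - m * ∫ ω, h (X ω) ∂P) / t - ∫ ω, phiR φ (h (X ω)) ∂P := by
          rw [integral_sub hlin_int (monotoneWeights.integrable_phiR hφ hh hX.aemeasurable),
            integral_div, integral_sub hhX_int (hh_int.const_mul m), integral_const_mul]
      _ ≤ (V - m) / t - β := by
          rw [sub_le_iff_le_add, div_le_iff₀ ht, add_mul, sub_mul, div_mul_cancel₀ _ ht.ne']
          linarith [hV h hh]
  refine iInf₂_le_of_le (m / t) t (iInf_le_of_le ht ?_)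
  rw [rhoObj, if_pos hψ, EReal.coe_le_coe_iff, ← le_div_iff₀' ht]
  linarith [sub_div V m t]

lemma exists_pos_multipliers [IsProbabilityMeasure P] (hφ : IsDivergenceFunction φ) (hβ : 0 < β)
    (hX : Integrable X P) {V' : ℝ} (hVV' : V < V')
    (hV : ∀ h ∈ monotoneWeights, ∫ ω, h (X ω) ∂P = 1 → ∫ ω, phiR φ (h (X ω)) ∂P ≤ β →
      ∫ ω, h (X ω) * X ω ∂P ≤ V) :
    ∃ m t : ℝ, 0 < t ∧ ∀ h ∈ monotoneWeights, ∫ ω, h (X ω) * X ω ∂P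
      ≤ V' + m * (∫ ω, h (X ω) ∂P - 1) + t * (∫ ω, phiR φ (h (X ω)) ∂P - β) := by
  obtain ⟨m, t, ht, hmt⟩ := exists_lagrange_multipliers
    (monotoneWeights.convexOn_integral_mul hX.aemeasurable (integrable_const 1))
    (monotoneWeights.concaveOn_integral_mul hX.aemeasurable (integrable_const 1))
    (monotoneWeights.convexOn_integral_phiR hφ hX.aemeasurable)
    (monotoneWeights.concaveOn_integral_mul hX.aemeasurable hX)
    (monotoneWeights.eventually_exists_weight hφ hβ (sub_one_lt _))
    (fun h hh hh_one => hV h hh (by simpa only [mul_one] using hh_one))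
  simp only [mul_one] at hmt
  have hβψ : 0 < β + psiR φ 0 := add_pos_of_pos_of_nonneg hβ hφ.psiR_zero_nonneg
  -- As `φ ≥ -ψ(0)`, raising the multiplier `t` by `s` costs at most `s (β + ψ(0)) = V' - V`.
  set s := (V' - V) / (β + psiR φ 0)
  have hs : 0 < s := div_pos (sub_pos.2 hVV') hβψ
  refine ⟨m, t + s, add_pos_of_nonneg_of_pos ht hs, fun h hh => (hmt h hh).trans ?_⟩
  have hφ_ge : -psiR φ 0 ≤ ∫ ω, phiR φ (h (X ω)) ∂P := by
    simpa using integral_mono (integrable_const _)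
      (monotoneWeights.integrable_phiR hφ hh hX.aemeasurable)
      fun ω => hφ.neg_psiR_zero_le_phiR (hh.2.1 (X ω))
  have hcost : -(V' - V) ≤ s * (∫ ω, phiR φ (h (X ω)) ∂P - β) := by
    calc -(V' - V) = s * (-psiR φ 0 - β) := by
          rw [← div_mul_cancel₀ (V' - V) hβψ.ne']
          ring
      _ ≤ s * (∫ ω, phiR φ (h (X ω)) ∂P - β) :=
          mul_le_mul_of_nonneg_left (sub_le_sub_right hφ_ge β) hs.le
  linarith

lemma rhoDiv_le_of_forall_weight [IsProbabilityMeasure P] (hφ : IsDivergenceFunction φ)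
    (hβ : 0 < β) (hX : Integrable X P) {S : EReal}
    (hS : ∀ h ∈ monotoneWeights, ∫ ω, h (X ω) ∂P = 1 → ∫ ω, phiR φ (h (X ω)) ∂P ≤ β →
      ((∫ ω, h (X ω) * X ω ∂P : ℝ) : EReal) ≤ S) :
    rhoDiv φ β P X ≤ S := by
  refine EReal.le_of_forall_lt_iff_le.1 fun V' hV' => ?_
  obtain ⟨V, hSV, hVV'⟩ := EReal.lt_iff_exists_real_btwn.1 hV'
  obtain ⟨m, t, ht, hmt⟩ := exists_pos_multipliers hφ hβ hX (EReal.coe_lt_coe_iff.1 hVV')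
    fun h hh hh_one hhβ => EReal.coe_le_coe_iff.1 ((hS h hh hh_one hhβ).trans hSV.le)
  exact rhoDiv_le_of_multipliers hφ hX ht hmt

end StrongDuality

section Quantile

lemma csInf_setOf_le_stieltjes_le_iff (F : StieltjesFunction ℝ) {u x : ℝ}
    (hne : {y | u ≤ F y}.Nonempty) (hbdd : BddBelow {y | u ≤ F y}) :
    sInf {y | u ≤ F y} ≤ x ↔ u ≤ F x := by
  refine ⟨fun hx => ?_, fun hx => csInf_le hbdd hx⟩
  rw [← F.iInf_Ioi_eq x]
  refine le_ciInf fun ⟨y, hxy⟩ => ?_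
  obtain ⟨w, hw, hwy⟩ := exists_lt_of_csInf_lt hne (hx.trans_lt hxy)
  exact hw.trans (F.mono hwy.le)

variable {P : Measure Ω} [IsProbabilityMeasure P] {X : Ω → ℝ} {u : ℝ}

lemma quantile_le_iff (hX : AEMeasurable X P) (hu : u ∈ Ioo (0 : ℝ) 1) (x : ℝ) :
    quantile P X u ≤ x ↔ u ≤ (P {ω | X ω ≤ x}).toReal := by
  have := Measure.isProbabilityMeasure_map hX
  have hcdf : ∀ y, (P {ω | X ω ≤ y}).toReal = cdf (P.map X) y := fun y => by
    rw [cdf_eq_real, map_measureReal_apply_of_aemeasurable hX measurableSet_Iic]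
    rfl
  simp only [quantile, hcdf]
  refine csInf_setOf_le_stieltjes_le_iff _ ?_ ?_
  · exact ((tendsto_cdf_atTop (P.map X)).eventually_const_le hu.2).exists
  · obtain ⟨y, hy⟩ := ((tendsto_cdf_atBot (P.map X)).eventually_lt_const hu.1).exists
    exact ⟨y, fun z hz => ((monotone_cdf _).reflect_lt (hy.trans_le hz)).le⟩

lemma monotoneOn_quantile (hX : AEMeasurable X P) :
    MonotoneOn (quantile P X) (Ioo (0 : ℝ) 1) := fun _ hu _ hv huv =>
  (quantile_le_iff hX hu _).2 (huv.trans ((quantile_le_iff hX hv _).1 le_rfl))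

/-- Lebesgue measure on the unit interval, the law of a uniform random variable. -/
abbrev unitVolume : Measure ℝ := volume.restrict (Icc (0 : ℝ) 1)

instance : IsProbabilityMeasure unitVolume := ⟨by simp⟩

lemma unitVolume_eq_restrict_Ioo : unitVolume = volume.restrict (Ioo (0 : ℝ) 1) :=
  Measure.restrict_congr_set Ioo_ae_eq_Icc.symm

lemma ae_unitVolume_mem_Ioo : ∀ᵐ u ∂unitVolume, u ∈ Ioo (0 : ℝ) 1 :=
  unitVolume_eq_restrict_Ioo ▸ ae_restrict_mem measurableSet_Ioo

lemma unitVolume_Iic (hu : u ∈ Icc (0 : ℝ) 1) : unitVolume (Iic u) = ENNReal.ofReal u := by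
  have hinter : Iic u ∩ Icc 0 1 = Icc 0 u := by
    rw [inter_comm, ← Ici_inter_Iic, inter_assoc, Iic_inter_Iic, min_eq_right hu.2, Ici_inter_Iic]
  rw [Measure.restrict_apply measurableSet_Iic, hinter, Real.volume_Icc, sub_zero]

lemma aemeasurable_quantile (hX : AEMeasurable X P) : AEMeasurable (quantile P X) unitVolume :=
  unitVolume_eq_restrict_Ioo ▸
    aemeasurable_restrict_of_monotoneOn measurableSet_Ioo (monotoneOn_quantile hX)

lemma map_quantile (hX : AEMeasurable X P) : unitVolume.map (quantile P X) = P.map X := by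
  have hq := aemeasurable_quantile hX
  have := Measure.isProbabilityMeasure_map hq
  refine Measure.ext_of_Iic _ _ fun x => ?_
  rw [Measure.map_apply_of_aemeasurable hq measurableSet_Iic,
    Measure.map_apply_of_aemeasurable hX measurableSet_Iic]
  calc unitVolume (quantile P X ⁻¹' Iic x) = unitVolume (Iic (P {ω | X ω ≤ x}).toReal) :=
        measure_congr <| ae_unitVolume_mem_Ioo.mono fun u hu => propext (quantile_le_iff hX hu x)
    _ = ENNReal.ofReal (P {ω | X ω ≤ x}).toReal :=
        unitVolume_Iic ⟨ENNReal.toReal_nonneg, measureReal_le_one⟩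
    _ = P (X ⁻¹' Iic x) := ENNReal.ofReal_toReal (measure_ne_top _ _)

lemma identDistrib_quantile (hX : AEMeasurable X P) :
    IdentDistrib (quantile P X) X unitVolume P :=
  ⟨aemeasurable_quantile hX, hX, map_quantile hX⟩

end Quantile

/-- The values `∫₀¹ σ q` over the spectra `σ` admissible for `φ` and `β`. -/
def spectralValues (φ : ℝ → EReal) (β : ℝ) (q : ℝ → ℝ) : Set EReal :=
  {v | ∃ σ : ℝ → ℝ≥0∞, MonotoneOn σ (Icc (0 : ℝ) 1) ∧
    (∫⁻ u, σ u ∂unitVolume) = 1 ∧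
    Integrable (fun u => phiR φ (σ u).toReal) unitVolume ∧
    (∫ u, phiR φ (σ u).toReal ∂unitVolume) ≤ β ∧
    Integrable (fun u => (σ u).toReal * q u) unitVolume ∧
    v = ((∫ u, (σ u).toReal * q u ∂unitVolume : ℝ) : EReal)}

section SpectralValues

variable {φ : ℝ → EReal} {β : ℝ} {q : ℝ → ℝ}

lemma le_rhoDiv_of_mem_spectralValues (hφ : IsDivergenceFunction φ) {v : EReal}
    (hv : v ∈ spectralValues φ β q) : v ≤ rhoDiv φ β unitVolume q := by
  obtain ⟨σ, hσ_mono, hσ_one, hσφ, hσβ, hσq, rfl⟩ := hv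
  have hσ : AEMeasurable σ unitVolume :=
    aemeasurable_restrict_of_monotoneOn measurableSet_Icc hσ_mono
  have hσ_integral : ∫ u, (σ u).toReal ∂unitVolume = 1 := by
    rw [integral_toReal hσ (ae_lt_top' hσ (hσ_one ▸ ENNReal.one_ne_top)), hσ_one,
      ENNReal.toReal_one]
  exact integral_mul_le_rhoDiv hφ (.of_forall fun _ => ENNReal.toReal_nonneg) hσ_integral hσφ hσβ
    hσq

lemma integral_weight_mem_spectralValues (hφ : IsDivergenceFunction φ)
    (hq_mono : MonotoneOn q (Ioo (0 : ℝ) 1)) (hq : Integrable q unitVolume) {h : ℝ → ℝ}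
    (hh : h ∈ monotoneWeights) (hh_one : ∫ u, h (q u) ∂unitVolume = 1)
    (hhβ : ∫ u, phiR φ (h (q u)) ∂unitVolume ≤ β) :
    ((∫ u, h (q u) * q u ∂unitVolume : ℝ) : EReal) ∈ spectralValues φ β q := by
  obtain ⟨K, hK⟩ := monotoneWeights.exists_mem_Icc hh
  -- `h ∘ q` need not be monotone up to the endpoints, where a quantile function has junk values.
  obtain ⟨g, hg_mono, hg⟩ := (hh.1.comp_monotoneOn hq_mono).exists_monotone_extension
    ⟨0, forall_mem_image.2 fun u _ => (hK (q u)).1⟩ ⟨K, forall_mem_image.2 fun u _ => (hK (q u)).2⟩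
  set σ : ℝ → ℝ≥0∞ := fun u => ENNReal.ofReal (g u)
  have hσ : ∀ᵐ u ∂unitVolume, σ u = ENNReal.ofReal (h (q u)) :=
    ae_unitVolume_mem_Ioo.mono fun u hu => congrArg ENNReal.ofReal (hg hu).symm
  have hσ_toReal : ∀ᵐ u ∂unitVolume, h (q u) = (σ u).toReal :=
    hσ.mono fun u hu => by rw [hu, ENNReal.toReal_ofReal (hh.2.1 _)]
  have hφσ : (fun u => phiR φ (h (q u))) =ᵐ[unitVolume] fun u => phiR φ (σ u).toReal :=
    hσ_toReal.mono fun u hu => congrArg (phiR φ) hu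
  have hσq : (fun u => h (q u) * q u) =ᵐ[unitVolume] fun u => (σ u).toReal * q u :=
    hσ_toReal.mono fun u hu => congrArg (· * q u) hu
  refine ⟨σ, fun _ _ _ _ huv => ENNReal.ofReal_le_ofReal (hg_mono huv), ?_,
    (monotoneWeights.integrable_phiR hφ hh hq.aemeasurable).congr hφσ,
    (integral_congr_ae hφσ).symm.trans_le hhβ,
    (monotoneWeights.integrable_mul hh hq.aemeasurable hq).congr hσq,
    congrArg _ (integral_congr_ae hσq)⟩
  rw [lintegral_congr_ae hσ, ← ofReal_integral_eq_lintegral_ofReal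
    (monotoneWeights.integrable hh hq.aemeasurable) (.of_forall fun u => hh.2.1 _), hh_one,
    ENNReal.ofReal_one]

end SpectralValues

theorem rhoDiv_spectral_representation_general (P : Measure Ω) [IsProbabilityMeasure P]
    (φ : ℝ → EReal) (hφ : IsDivergenceFunction φ) (β : ℝ) (hβ : 0 < β) (X : Ω → ℝ)
    (hX : Integrable X P) :
    rhoDiv φ β P X = sSup (spectralValues φ β (quantile P X)) := by
  have hqX : IdentDistrib (quantile P X) X unitVolume P := identDistrib_quantile hX.aemeasurable
  have hq : Integrable (quantile P X) unitVolume := hqX.integrable_iff.2 hX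
  rw [← rhoDiv_congr hφ hqX]
  refine le_antisymm ?_ (sSup_le fun v hv => le_rhoDiv_of_mem_spectralValues hφ hv)
  exact rhoDiv_le_of_forall_weight hφ hβ hq fun h hh hh_one hhβ => le_sSup <|
    integral_weight_mem_spectralValues hφ (monotoneOn_quantile hX.aemeasurable) hq hh hh_one hhβ

/-- Spectral (Kusuoka) representation: `ρ_{φ,β}(X) = sup_σ ∫₀¹ σ(u)·F_X⁻¹(u) du`, the
supremum over all non-decreasing `σ : [0,1] → [0,∞]` with `∫₀¹ σ = 1` and
`∫₀¹ φ(σ(u)) du ≤ β`. -/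
theorem rhoDiv_spectral_representation (P : Measure Ω) [IsProbabilityMeasure P]
    (φ : ℝ → EReal) (hφ : IsDivergenceFunction φ) (β : ℝ) (hβ : 0 < β)
    (X : Ω → ℝ) (hX : Integrable X P)
    (hXpsi : ∃ t : ℝ, 0 < t ∧ Integrable (fun ω => psiR φ (t * |X ω|)) P) :
    rhoDiv φ β P X = sSup {v : EReal | ∃ σ : ℝ → ℝ≥0∞,
      MonotoneOn σ (Set.Icc (0 : ℝ) 1) ∧
      (∫⁻ u in Set.Icc (0 : ℝ) 1, σ u) = 1 ∧
      Integrable (fun u => (φ ((σ u).toReal)).toReal)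
        (MeasureTheory.volume.restrict (Set.Icc (0 : ℝ) 1)) ∧
      (∫ u in Set.Icc (0 : ℝ) 1, (φ ((σ u).toReal)).toReal) ≤ β ∧
      Integrable (fun u => (σ u).toReal * quantile P X u)
        (MeasureTheory.volume.restrict (Set.Icc (0 : ℝ) 1)) ∧
      v = ((∫ u in Set.Icc (0 : ℝ) 1, (σ u).toReal * quantile P X u : ℝ) : EReal)} :=
  rhoDiv_spectral_representation_general P φ hφ β hβ X hX
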